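/- arXiv:2309.11229 — 2 statements merged into one kernel-verified Lean document; each statement's English description precedes it below -/
import Mathlib

section
/- Let n be an odd integer with n ≥ 7 and let f : F → 𝔽₂ be defined by f(x) = tr(x^{15}). For every a ∈ F with a ≠ 0, the number of b ∈ F \ {0, 1} such that the linear kernel E_{D_{ab} D_a f} has cardinality at most 8 is at least 3·2^{n−4} + 10. -/
noncomputable section

/-- `Fq n` is the finite field with `2 ^ n` elements. -/
abbrev Fq (n : ℕ) : Type := GaloisField 2 n

/-- The absolute trace map `tr x = x + x^2 + x^4 + ⋯ + x^(2^(n-1))` from `Fq n` to `𝔽₂`. -/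
def tr {n : ℕ} (x : Fq n) : ZMod 2 := Algebra.trace (ZMod 2) (Fq n) x

/-- The derivative of `f` with respect to `a`. -/
def der {n : ℕ} (f : Fq n → ZMod 2) (a : Fq n) : Fq n → ZMod 2 :=
  fun x => f x + f (x + a)

/-- Iterated derivatives along a list of directions (head applied last/outermost). -/
def derIter {n : ℕ} (f : Fq n → ZMod 2) : List (Fq n) → (Fq n → ZMod 2)
  | [] => f
  | a :: as => der (derIter f as) a

/-- `g` has algebraic degree at most `r`: all `(r+1)`-th order derivatives vanish. -/
def degLE {n : ℕ} (g : Fq n → ZMod 2) (r : ℕ) : Prop :=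
  ∀ l : List (Fq n), l.length = r + 1 → derIter g l = fun _ => 0

/-- Hamming distance between two Boolean functions on `Fq n`. -/
def hdist {n : ℕ} (f g : Fq n → ZMod 2) : ℕ :=
  {x : Fq n | f x ≠ g x}.ncard

/-- The `r`-th order nonlinearity of `f`. -/
def nl {n : ℕ} (r : ℕ) (f : Fq n → ZMod 2) : ℕ :=
  sInf {d : ℕ | ∃ g : Fq n → ZMod 2, degLE g r ∧ d = hdist f g}

/-- The linear kernel of `f`: directions along which the derivative is constant. -/
def linKer {n : ℕ} (f : Fq n → ZMod 2) : Set (Fq n) :=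
  {b | ∃ c : ZMod 2, ∀ x, der f b x = c}

/-- The weight of a Boolean function on `Fq n`. -/
def wt {n : ℕ} (f : Fq n → ZMod 2) : ℕ := {x : Fq n | f x = 1}.ncard

/-! Let `℘ x = x² + x`. For `b ∉ {0, 1}` write `℘ b = u³`, which is possible because cubing is
bijective for odd `n`, and put `κ = a⁻⁵`. The third derivatives of `tr (x¹⁵)` are traces of the
Moore determinant of `℘ b`, `℘ x`, `℘ y`, and this determinant equals, up to a constant factor,
the one of `L x` and `L y` for a linear map `L` with kernel of dimension at most two. The radical
of the form `Tr (x y² + x² y)` is `{0, 1}`, so the linear kernel has dimension at most three unless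
`1` lies in the range of `L`. In that case there is a point `(u, v)` on the curve
`u v³ (u³ + v³) = κ` such that `u³` and `v³` have trace zero, and replacing `v` by the cube root of
`u³ + v³` gives a second one. Conversely `u` determines `b` up to adding `1`, so there are at most
as many exceptional `b` as such points. The points are counted by the Kloosterman-type sums of
`(-1) ^ Tr (κ u⁻⁷)` and `(-1) ^ Tr (κ u⁻⁷ + u³)`, which are bounded by their second and fourth
moments: each value is repeated along an orbit of `t ∈ Fˣ` acting by
`(κ, μ) ↦ (κ t⁷, μ t⁻³)`. For `n = 7` these bounds are sharpened by the action of Frobenius, whose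
nontrivial orbits have length seven. -/

section LinearAlgebra

open Module

theorem finrank_comap_eq {K V W : Type*} [Field K] [AddCommGroup V] [Module K V]
    [FiniteDimensional K V] [AddCommGroup W] [Module K W] (L : V →ₗ[K] W) (U : Submodule K W) :
    finrank K (U.comap L) = finrank K ↥(L.range ⊓ U) + finrank K L.ker := by
  have hker : L.ker ≤ U.comap L := Submodule.comap_mono bot_le
  rw [← (L.domRestrict (U.comap L)).finrank_range_add_finrank_ker, LinearMap.range_domRestrict,
    Submodule.map_comap_eq, LinearMap.ker_domRestrict,
    (Submodule.comapSubtypeEquivOfLe hker).finrank_eq]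

theorem finrank_comap_orthogonal_range_lt {K V : Type*} [Field K] [AddCommGroup V] [Module K V]
    [FiniteDimensional K V] {B : LinearMap.BilinForm K V} (hB : B.IsRefl) (L : V →ₗ[K] V)
    (hrad : B.orthogonal ⊤ ≠ ⊥) (hL : Disjoint L.range (B.orthogonal ⊤)) :
    finrank K ((B.orthogonal L.range).comap L) < 2 * finrank K L.ker := by
  have hfinrank : finrank K (B.orthogonal L.range) = finrank K L.ker := by
    have h := B.finrank_add_finrank_orthogonal hB L.range
    rw [hL.eq_bot, finrank_bot, add_zero, ← L.finrank_range_add_finrank_ker] at h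
    exact Nat.add_left_cancel h
  have hlt : L.range ⊓ B.orthogonal L.range < B.orthogonal L.range := by
    refine lt_of_le_of_ne inf_le_right fun heq => hrad (hL.eq_bot_of_ge ?_)
    exact (LinearMap.BilinForm.orthogonal_le le_top).trans (inf_eq_right.mp heq)
  calc finrank K ((B.orthogonal L.range).comap L)
      = finrank K ↥(L.range ⊓ B.orthogonal L.range) + finrank K L.ker := finrank_comap_eq L _
    _ < finrank K (B.orthogonal L.range) + finrank K L.ker := by
      gcongr; exact Submodule.finrank_lt_finrank_of_lt hlt
    _ = 2 * finrank K L.ker := by rw [hfinrank, two_mul]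

end LinearAlgebra

section FiniteSums

open Finset

theorem sum_comp_le_sum {ι α : Type*} [Fintype ι] [Fintype α] {f : ι → α}
    (hf : Function.Injective f) {g : α → ℤ} (hg : ∀ x, 0 ≤ g x) : ∑ i, g (f i) ≤ ∑ x, g x :=
  (sum_map univ ⟨f, hf⟩ g).symm.trans_le (sum_le_univ_sum_of_nonneg hg)

theorem prime_dvd_card_of_iterate_eq {α : Type*} {p : ℕ} (hp : p.Prime)
    {S : Finset α} {f : α → α} (hS : ∀ x ∈ S, f x ∈ S) (hf : ∀ x ∈ S, f^[p] x = x)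
    (hfix : ∀ x ∈ S, f x ≠ x) : p ∣ #S := by
  classical
  have := Fact.mk hp
  let g : Function.End S := Set.MapsTo.restrict f S S hS
  have hg : g ^ p ^ 1 = 1 := by
    rw [pow_one]
    refine (hom_coe_pow (fun g : Function.End S => g) rfl (fun _ _ => rfl) g p).trans ?_
    funext x
    exact Subtype.ext ((Set.MapsTo.coe_iterate_restrict hS x p).trans (hf x x.2))
  have hempty : IsEmpty (Function.fixedPoints g) :=
    ⟨fun x => hfix x.1 x.1.2 (congrArg Subtype.val x.2)⟩
  have h := Equiv.Perm.card_fixedPoints_modEq hg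
  rw [Fintype.card_coe, Fintype.card_eq_zero_iff.mpr hempty] at h
  exact Nat.modEq_zero_iff_dvd.mp h

end FiniteSums

section PowerMap

open Finset

theorem units_val_pow_injective {M : Type*} [Monoid M] {k : ℕ} (hcop : (Nat.card Mˣ).Coprime k) :
    Function.Injective fun u : Mˣ => (u : M) ^ k := fun u v h =>
  hcop.pow_left_bijective.injective (Units.ext (by simpa using h))

theorem card_pow_eq_le_gcd {G : Type*} [CommGroup G] [IsCyclic G] [Fintype G] [DecidableEq G]
    (j : ℕ) (s : G) : #{t : G | t ^ j = s} ≤ (Fintype.card G).gcd j := by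
  obtain hempty | ⟨r, hr⟩ := Finset.eq_empty_or_nonempty {t : G | t ^ j = s}
  · simp only [hempty, card_empty, zero_le]
  · have hker : #{t : G | t ^ j = 1} = (Fintype.card G).gcd j := by
      rw [← Nat.card_eq_fintype_card, ← IsCyclic.card_powMonoidHom_ker, ← Fintype.card_subtype,
        ← Nat.card_eq_fintype_card]
      rfl
    have hfiber := MonoidHom.card_fiber_eq_of_mem_range (powMonoidHom j : G →* G)
      ⟨r, (mem_filter.mp hr).2⟩ ⟨1, one_pow j⟩
    exact (hfiber.trans hker).le

theorem sum_units_mul_pow_le {F : Type*} [Field F] [Fintype F] [DecidableEq F] {g : F → ℤ}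
    (hg : ∀ x, 0 ≤ g x) (j : ℕ) {κ : F} (hκ : κ ≠ 0) :
    ∑ t : Fˣ, g (κ * t ^ j) ≤ (Fintype.card Fˣ).gcd j * ∑ x, g x := by
  calc ∑ t : Fˣ, g (κ * t ^ j)
      = ∑ s : Fˣ, #{t : Fˣ | t ^ j = s} • g (κ * s) := by
        rw [← Finset.sum_fiberwise univ (fun t : Fˣ => t ^ j)]
        refine sum_congr rfl fun s _ => sum_eq_card_nsmul fun t ht => ?_
        rw [← (mem_filter.mp ht).2, Units.val_pow_eq_pow_val]
    _ ≤ ∑ s : Fˣ, (Fintype.card Fˣ).gcd j • g (κ * s) := by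
        gcongr with s _
        · exact hg _
        · exact card_pow_eq_le_gcd j s
    _ = (Fintype.card Fˣ).gcd j * ∑ s : Fˣ, g (κ * s) := by rw [← smul_sum, nsmul_eq_mul]
    _ ≤ (Fintype.card Fˣ).gcd j * ∑ x, g x := by
        gcongr
        exact sum_comp_le_sum ((mul_right_injective₀ hκ).comp Units.val_injective) hg

theorem pow_two_pow_one_eq_self_iff {F : Type*} [Field F] (x : F) :
    x ^ 2 ^ 1 = x ↔ x = 0 ∨ x = 1 := by
  grind

theorem pow_two_pow_two_eq_self_iff {F : Type*} [Field F] (hcop : (Nat.card Fˣ).Coprime 3)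
    (x : F) : x ^ 2 ^ 2 = x ↔ x = 0 ∨ x = 1 := by
  refine ⟨fun h => or_iff_not_imp_left.mpr fun hx => ?_, by rintro (rfl | rfl) <;> simp⟩
  have hcube : x ^ 3 = 1 := mul_left_cancel₀ hx (by linear_combination h)
  exact congrArg Units.val (units_val_pow_injective hcop
    (show (Units.mk0 x hx : F) ^ 3 = (1 : Fˣ) ^ 3 by simpa using hcube))

theorem iterate_sq_eq_self {F : Type*} [Field F] [Fintype F] {p : ℕ}
    (hF : Fintype.card F = 2 ^ p) (x : F) : (fun x : F => x ^ 2)^[p] x = x := by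
  rw [pow_iterate, ← hF]
  exact FiniteField.pow_card x

end PowerMap

section PairPoly

open Finset Polynomial

variable {F : Type*} [Field F]

/-- The power sum `x ^ k + y ^ k` of a pair of units. -/
def powSum (k : ℕ) (p : Fˣ × Fˣ) : F := p.1 ^ k + p.2 ^ k

theorem powSum_eq_zero_iff [CharP F 2] {k : ℕ} (hcop : (Nat.card Fˣ).Coprime k) (p : Fˣ × Fˣ) :
    powSum k p = 0 ↔ p.1 = p.2 := by
  rw [powSum, CharTwo.add_eq_zero]
  exact (units_val_pow_injective hcop).eq_iff

/-- The polynomial annihilating the first entry `x` of every pair of units with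
`x ^ k + y ^ k = A` and `x⁻¹ ^ j + y⁻¹ ^ j = B`. It comes from eliminating `y` through
`B * x ^ j - 1 = (x / y) ^ j` and `A - x ^ k = y ^ k`. -/
def pairPoly (j k : ℕ) (A B : F) : F[X] :=
  (C B * X ^ j - 1) ^ k * (C A - X ^ k) ^ j - X ^ (j * k)

theorem natDegree_pairPoly_le (j k : ℕ) (A B : F) : (pairPoly j k A B).natDegree ≤ 2 * j * k := by
  unfold pairPoly
  compute_degree
  exact le_of_eq (by ring)

theorem pairPoly_ne_zero {j k : ℕ} (hj : j ≠ 0) (hk : k ≠ 0) {A : F} (hA : A ≠ 0) (B : F) :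
    pairPoly j k A B ≠ 0 := by
  intro h
  have h0 : (pairPoly j k A B).eval 0 = 0 := by rw [h, eval_zero]
  simp [pairPoly, hj, hk, hA] at h0

theorem pairPoly_eval_powSum (j k : ℕ) (p : Fˣ × Fˣ) :
    (pairPoly j k (powSum k p) (powSum j p⁻¹)).eval (p.1 : F) = 0 := by
  have hj : powSum j p⁻¹ * (p.1 : F) ^ j - 1 = (p.1 / p.2 : F) ^ j := by
    simp [powSum, add_mul, mul_pow, div_eq_mul_inv, mul_comm ((p.2 : F) ^ j)⁻¹]
  have hk : powSum k p - (p.1 : F) ^ k = (p.2 : F) ^ k := add_sub_cancel_left _ _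
  simp only [pairPoly, eval_sub, eval_mul, eval_pow, eval_C, eval_X, eval_one, hj, hk]
  rw [← pow_mul, ← pow_mul, mul_comm k j, ← mul_pow, div_mul_cancel₀ _ p.2.ne_zero, sub_self]

variable [Fintype F] [DecidableEq F]

theorem card_powSum_eq_le {j k : ℕ} (hj : j ≠ 0) (hk : k ≠ 0)
    (hcop : (Nat.card Fˣ).Coprime k) {A : F} (hA : A ≠ 0) (B : F) :
    #{p : Fˣ × Fˣ | powSum j p⁻¹ = B ∧ powSum k p = A} ≤ 2 * j * k := by
  have hroot : ∀ p ∈ ({p | powSum j p⁻¹ = B ∧ powSum k p = A} : Finset (Fˣ × Fˣ)),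
      (p.1 : F) ∈ (pairPoly j k A B).roots.toFinset := by
    intro p hp
    obtain ⟨rfl, rfl⟩ := (mem_filter.mp hp).2
    rw [Multiset.mem_toFinset, mem_roots (pairPoly_ne_zero hj hk hA _)]
    exact pairPoly_eval_powSum j k p
  have hinj : Set.InjOn (fun p : Fˣ × Fˣ => (p.1 : F))
      ({p | powSum j p⁻¹ = B ∧ powSum k p = A} : Finset (Fˣ × Fˣ)) := by
    rintro ⟨x, y⟩ hp ⟨x', y'⟩ hp' hx
    obtain rfl : x = x' := Units.ext hx
    have hy : powSum k (x, y) = powSum k (x, y') :=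
      (mem_filter.mp hp).2.2.trans (mem_filter.mp hp').2.2.symm
    exact congrArg _ (units_val_pow_injective hcop (add_left_cancel hy))
  calc _ ≤ #(pairPoly j k A B).roots.toFinset := card_le_card_of_injOn _ hroot hinj
    _ ≤ (pairPoly j k A B).natDegree := (Multiset.toFinset_card_le _).trans (card_roots' _)
    _ ≤ 2 * j * k := natDegree_pairPoly_le j k A B

theorem card_powSum_eq_zero [CharP F 2] {k : ℕ} (hcop : (Nat.card Fˣ).Coprime k) :
    #{p : Fˣ × Fˣ | powSum k p = 0} = Fintype.card Fˣ := by
  simp only [powSum_eq_zero_iff hcop]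
  rw [← univ_product_univ, ← diag_eq_filter, diag_card, card_univ]

theorem sum_card_powSum_eq_le [CharP F 2] {j k : ℕ} (hj : j ≠ 0) (hk : k ≠ 0)
    (hcop : (Nat.card Fˣ).Coprime k) :
    ∑ p : Fˣ × Fˣ, #{p' : Fˣ × Fˣ | powSum j p'⁻¹ = powSum j p⁻¹ ∧ powSum k p' = powSum k p} ≤
      (2 * j * k + 1) * Fintype.card Fˣ ^ 2 := by
  calc ∑ p : Fˣ × Fˣ, #{p' : Fˣ × Fˣ | powSum j p'⁻¹ = powSum j p⁻¹ ∧ powSum k p' = powSum k p}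
      ≤ ∑ p : Fˣ × Fˣ, ((if powSum k p = 0 then Fintype.card Fˣ else 0) + 2 * j * k) := by
        gcongr with p _
        split_ifs with hp
        · refine le_add_right ((card_le_card ?_).trans (card_powSum_eq_zero hcop).le)
          exact fun p' hp' => by simp_all
        · exact (card_powSum_eq_le hj hk hcop hp _).trans (zero_add _).ge
    _ = Fintype.card Fˣ * Fintype.card Fˣ + Fintype.card Fˣ ^ 2 * (2 * j * k) := by
        rw [sum_add_distrib, ← sum_filter, sum_const, sum_const, card_powSum_eq_zero hcop,
          card_univ, Fintype.card_prod, smul_eq_mul, smul_eq_mul, sq]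
    _ = (2 * j * k + 1) * Fintype.card Fˣ ^ 2 := by ring

end PairPoly

section Kloosterman

open Finset

theorem addChar_mul_self {R M : Type*} [Semiring R] [CharP R 2] [CommMonoid M] (ψ : AddChar R M)
    (x : R) : ψ x * ψ x = 1 := by
  rw [← AddChar.map_add_eq_mul, CharTwo.add_self_eq_zero, AddChar.map_zero_eq_one]

theorem addChar_pow_two_pow {R M : Type*} [Semiring R] [Monoid M] {ψ : AddChar R M}
    (hfrob : ∀ x, ψ (x ^ 2) = ψ x) (k : ℕ) (x : R) : ψ (x ^ 2 ^ k) = ψ x := by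
  induction k with
  | zero => simp
  | succ k ih => rw [pow_succ, pow_mul, hfrob, ih]

variable {F : Type*} [Field F] [Fintype F] [DecidableEq F]

/-- The Kloosterman-type sum of `ψ (κ * u⁻¹ ^ j + μ * u ^ k)` over the nonzero `u`. A quadratic
character is modelled as an additive character with values in `ℤ`. -/
def kloosterman (ψ : AddChar F ℤ) (j k : ℕ) (κ μ : F) : ℤ :=
  ∑ u : Fˣ, ψ (κ * (u : F)⁻¹ ^ j + μ * u ^ k)

theorem kloosterman_mul_pow (ψ : AddChar F ℤ) (j k : ℕ) (κ μ : F) (t : Fˣ) :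
    kloosterman ψ j k (κ * t ^ j) (μ * (t : F)⁻¹ ^ k) = kloosterman ψ j k κ μ := by
  refine Fintype.sum_equiv (Equiv.mulLeft t⁻¹) _ _ fun u => congrArg ψ ?_
  simp only [Equiv.coe_mulLeft, Units.val_mul, Units.val_inv_eq_inv_val, mul_inv, inv_inv, mul_pow,
    mul_assoc]

theorem kloosterman_eq_weighted (ψ : AddChar F ℤ) (j k : ℕ) (κ μ : F) :
    kloosterman ψ j k κ μ = ∑ u : Fˣ, ψ (μ * u ^ k) * ψ (κ * (u : F)⁻¹ ^ j) := by
  simp only [kloosterman, AddChar.map_add_eq_mul, mul_comm]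

theorem kloosterman_sq (ψ : AddChar F ℤ) (j k : ℕ) (κ μ : F) :
    kloosterman ψ j k κ μ ^ 2 =
      ∑ p : Fˣ × Fˣ, ψ (μ * powSum k p) * ψ (κ * powSum j p⁻¹) := by
  rw [sq, kloosterman, sum_mul_sum, ← univ_product_univ, sum_product]
  refine sum_congr rfl fun u _ => sum_congr rfl fun v _ => ?_
  rw [← AddChar.map_add_eq_mul, ← AddChar.map_add_eq_mul]
  congr 1
  simp [powSum]
  ring

variable {ψ : AddChar F ℤ}

theorem sum_units_addChar_mul_pow (hψ : ψ.IsPrimitive) {k : ℕ} (hcop : (Nat.card Fˣ).Coprime k)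
    {κ : F} (hκ : κ ≠ 0) : ∑ u : Fˣ, ψ (κ * u ^ k) = -1 := by
  calc ∑ u : Fˣ, ψ (κ * u ^ k) = ∑ u : Fˣ, ψ (u * κ) :=
        Fintype.sum_equiv (powCoprime hcop) _ _ fun u => by simp [mul_comm]
    _ = ∑ x ∈ univ.erase (0 : F), ψ (x * κ) :=
        sum_nbij Units.val (fun u _ => by simp) Units.val_injective.injOn
          (fun x hx => ⟨Units.mk0 x (by simpa using hx), by simp⟩) fun _ _ => rfl
    _ = -1 := by
        have h := sum_erase_add univ (fun x => ψ (x * κ)) (mem_univ 0)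
        rw [AddChar.sum_mulShift κ hψ, if_neg hκ, zero_mul, AddChar.map_zero_eq_one] at h
        exact eq_neg_of_add_eq_zero_left h

theorem kloosterman_zero_right (hψ : ψ.IsPrimitive) {j : ℕ} (hcop : (Nat.card Fˣ).Coprime j)
    (k : ℕ) {κ : F} (hκ : κ ≠ 0) : kloosterman ψ j k κ 0 = -1 := by
  rw [← sum_units_addChar_mul_pow hψ hcop hκ, kloosterman]
  exact Fintype.sum_equiv (Equiv.inv Fˣ) _ _ fun u => by simp

variable [CharP F 2]

theorem kloosterman_frobenius (hfrob : ∀ x, ψ (x ^ 2) = ψ x) (j k : ℕ) (κ μ : F) :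
    kloosterman ψ j k (κ ^ 2) (μ ^ 2) = kloosterman ψ j k κ μ := by
  refine (Fintype.sum_equiv (Units.mapEquiv (frobeniusEquiv F 2).toMulEquiv).toEquiv _ _
    fun u => ?_).symm
  rw [← hfrob, CharTwo.add_sq]
  simp [frobenius_def, ← pow_mul, mul_pow, mul_comm]

theorem sum_sq_weighted_charSum (hψ : ψ.IsPrimitive) {ι : Type*} [Fintype ι] (w : ι → ℤ)
    (p : ι → F) :
    ∑ κ, (∑ i, w i * ψ (κ * p i)) ^ 2 =
      Fintype.card F * ∑ i, ∑ i', if p i = p i' then w i * w i' else 0 := by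
  have expand (κ : F) : (∑ i, w i * ψ (κ * p i)) ^ 2 =
      ∑ i, ∑ i', w i * w i' * ψ (κ * (p i + p i')) := by
    rw [sq, sum_mul_sum]
    refine sum_congr rfl fun i _ => sum_congr rfl fun i' _ => ?_
    rw [mul_add, AddChar.map_add_eq_mul]
    ring
  simp_rw [expand, mul_sum]
  rw [sum_comm]
  refine sum_congr rfl fun i _ => ?_
  rw [sum_comm]
  refine sum_congr rfl fun i' _ => ?_
  rw [← mul_sum, AddChar.sum_mulShift _ hψ]
  simp only [CharTwo.add_eq_zero]
  split_ifs <;> simp [mul_comm]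

theorem sum_kloosterman_sq_le (hψ : ψ.IsPrimitive) (j k : ℕ) (μ : F) :
    ∑ κ, kloosterman ψ j k κ μ ^ 2 ≤
      Fintype.card F * (Fintype.card Fˣ * (Fintype.card Fˣ).gcd j) := by
  simp_rw [kloosterman_eq_weighted, sum_sq_weighted_charSum hψ]
  gcongr
  calc ∑ u : Fˣ, ∑ v : Fˣ, (if (u : F)⁻¹ ^ j = (v : F)⁻¹ ^ j then ψ (μ * u ^ k) * ψ (μ * v ^ k)
        else 0)
      ≤ ∑ u : Fˣ, ∑ v : Fˣ, if v ^ j = u ^ j then 1 else 0 := by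
        gcongr with u _ v _
        have hiff : (u : F)⁻¹ ^ j = (v : F)⁻¹ ^ j ↔ v ^ j = u ^ j := by
          rw [inv_pow, inv_pow, inv_inj, eq_comm, Units.ext_iff, Units.val_pow_eq_pow_val,
            Units.val_pow_eq_pow_val]
        simp only [hiff]
        split_ifs
        · nlinarith [addChar_mul_self ψ (μ * u ^ k), addChar_mul_self ψ (μ * v ^ k),
            sq_nonneg (ψ (μ * u ^ k) - ψ (μ * v ^ k))]
        · rfl
    _ = ∑ u : Fˣ, (#{v : Fˣ | v ^ j = u ^ j} : ℤ) := by simp only [sum_boole]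
    _ ≤ ∑ _u : Fˣ, ((Fintype.card Fˣ).gcd j : ℤ) := by
        gcongr with u _
        exact card_pow_eq_le_gcd j _
    _ = Fintype.card Fˣ * (Fintype.card Fˣ).gcd j := by
        rw [sum_const, nsmul_eq_mul, card_univ]

theorem kloosterman_zero_right_sq_le (hψ : ψ.IsPrimitive) (j k : ℕ) {κ : F} (hκ : κ ≠ 0) :
    kloosterman ψ j k κ 0 ^ 2 ≤ Fintype.card F * (Fintype.card Fˣ).gcd j ^ 2 := by
  have hpos : (0 : ℤ) < Fintype.card Fˣ := by exact_mod_cast Fintype.card_pos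
  have horbit : (Fintype.card Fˣ : ℤ) * kloosterman ψ j k κ 0 ^ 2 =
      ∑ t : Fˣ, kloosterman ψ j k (κ * t ^ j) 0 ^ 2 := by
    have hinv (t : Fˣ) := kloosterman_mul_pow ψ j k κ 0 t
    simp only [zero_mul] at hinv
    simp only [hinv, sum_const, card_univ, nsmul_eq_mul]
  refine le_of_mul_le_mul_left ?_ hpos
  calc (Fintype.card Fˣ : ℤ) * kloosterman ψ j k κ 0 ^ 2
      ≤ (Fintype.card Fˣ).gcd j * ∑ κ, kloosterman ψ j k κ 0 ^ 2 :=
        horbit.trans_le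
          (sum_units_mul_pow_le (g := fun κ => kloosterman ψ j k κ 0 ^ 2) (fun _ => sq_nonneg _)
            j hκ)
    _ ≤ (Fintype.card Fˣ).gcd j *
          (Fintype.card F * (Fintype.card Fˣ * (Fintype.card Fˣ).gcd j)) := by
        gcongr; exact sum_kloosterman_sq_le hψ j k 0
    _ = Fintype.card Fˣ * (Fintype.card F * (Fintype.card Fˣ).gcd j ^ 2) := by ring

theorem mul_kloosterman_sq_le {p : ℕ} (hp : p.Prime) (hF : Fintype.card F = 2 ^ p)
    (hψ : ψ.IsPrimitive) (hfrob : ∀ x, ψ (x ^ 2) = ψ x) (j k : ℕ) {κ : F} (hκ₀ : κ ≠ 0)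
    (hκ₁ : κ ≠ 1) :
    p * kloosterman ψ j k κ 1 ^ 2 ≤
      Fintype.card F * (Fintype.card Fˣ * (Fintype.card Fˣ).gcd j) := by
  let S : Finset F := {x | x ≠ 0 ∧ x ≠ 1 ∧ kloosterman ψ j k x 1 = kloosterman ψ j k κ 1}
  have hdvd : p ∣ #S := by
    refine prime_dvd_card_of_iterate_eq hp (f := fun x => x ^ 2) (fun x hx => ?_)
      (fun x _ => iterate_sq_eq_self hF x) fun x hx hfix => ?_
    · obtain ⟨h0, h1, hK⟩ := (mem_filter.mp hx).2
      have hsq : kloosterman ψ j k (x ^ 2) 1 = kloosterman ψ j k x 1 := by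
        simpa using kloosterman_frobenius hfrob j k x 1
      simp [S, h0, h1, hK, hsq, CharTwo.neg_eq]
    · obtain ⟨h0, h1, -⟩ := (mem_filter.mp hx).2
      exact ((pow_two_pow_one_eq_self_iff x).mp hfix).elim h0 h1
  have hcard : p ≤ #S := Nat.le_of_dvd (card_pos.mpr ⟨κ, by simp [S, hκ₀, hκ₁]⟩) hdvd
  calc p * kloosterman ψ j k κ 1 ^ 2
      ≤ #S * kloosterman ψ j k κ 1 ^ 2 := by gcongr
    _ = ∑ x ∈ S, kloosterman ψ j k x 1 ^ 2 := by
        rw [sum_congr rfl fun x hx => by rw [(mem_filter.mp hx).2.2.2], sum_const, nsmul_eq_mul]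
    _ ≤ ∑ x, kloosterman ψ j k x 1 ^ 2 := sum_le_univ_sum_of_nonneg fun _ => sq_nonneg _
    _ ≤ _ := sum_kloosterman_sq_le hψ j k 1

theorem sum_kloosterman_pow_four (hψ : ψ.IsPrimitive) (j k : ℕ) :
    ∑ μ, ∑ κ, kloosterman ψ j k κ μ ^ 4 = (Fintype.card F : ℤ) ^ 2 * ∑ p : Fˣ × Fˣ,
      (#{p' : Fˣ × Fˣ | powSum j p'⁻¹ = powSum j p⁻¹ ∧ powSum k p' = powSum k p} : ℤ) := by
  have hκ (μ : F) : ∑ κ, kloosterman ψ j k κ μ ^ 4 = Fintype.card F *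
      ∑ p : Fˣ × Fˣ, ∑ p' : Fˣ × Fˣ, if powSum j p⁻¹ = powSum j p'⁻¹ then
        ψ (μ * (powSum k p + powSum k p')) else 0 := by
    simp_rw [show 4 = 2 * 2 from rfl, pow_mul, kloosterman_sq, sum_sq_weighted_charSum hψ,
      ← AddChar.map_add_eq_mul, ← mul_add]
  simp_rw [hκ, ← mul_sum, sq, mul_assoc]
  rw [sum_comm]
  refine congrArg ((Fintype.card F : ℤ) * ·) ?_
  rw [mul_sum]
  refine sum_congr rfl fun p _ => ?_
  rw [sum_comm, natCast_card_filter, mul_sum]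
  refine sum_congr rfl fun p' _ => ?_
  simp only [eq_comm (a := powSum _ p'⁻¹), eq_comm (a := powSum _ p')]
  by_cases hj : powSum j p⁻¹ = powSum j p'⁻¹
  · simp only [hj, if_true, true_and, AddChar.sum_mulShift _ hψ, CharTwo.add_eq_zero, mul_ite,
      mul_one, mul_zero, Nat.cast_ite, Nat.cast_zero]
  · simp only [hj, if_false, false_and, sum_const_zero, mul_zero]

theorem kloosterman_pow_four_le (hψ : ψ.IsPrimitive) {j k : ℕ} (hj : j ≠ 0) (hk : k ≠ 0)
    (hcop : (Nat.card Fˣ).Coprime k) (κ : F) {μ : F} (hμ : μ ≠ 0) :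
    kloosterman ψ j k κ μ ^ 4 ≤
      (2 * j * k + 1) * (Fintype.card F ^ 2 * Fintype.card Fˣ) := by
  have hpos : (0 : ℤ) < Fintype.card Fˣ := by exact_mod_cast Fintype.card_pos
  have hinj : Function.Injective fun t : Fˣ => (μ * (t : F)⁻¹ ^ k, κ * (t : F) ^ j) := by
    intro t t' ht
    have hpow : (t : F)⁻¹ ^ k = (t' : F)⁻¹ ^ k := mul_left_cancel₀ hμ (Prod.ext_iff.mp ht).1
    rw [inv_pow, inv_pow, inv_inj] at hpow
    exact hcop.pow_left_bijective.injective (Units.ext (by simpa using hpow))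
  have horbit : (Fintype.card Fˣ : ℤ) * kloosterman ψ j k κ μ ^ 4 =
      ∑ t : Fˣ, kloosterman ψ j k (κ * t ^ j) (μ * (t : F)⁻¹ ^ k) ^ 4 := by
    simp only [kloosterman_mul_pow, sum_const, card_univ, nsmul_eq_mul]
  refine le_of_mul_le_mul_left ?_ hpos
  calc (Fintype.card Fˣ : ℤ) * kloosterman ψ j k κ μ ^ 4
      ≤ ∑ x : F × F, kloosterman ψ j k x.2 x.1 ^ 4 :=
        horbit.trans_le (sum_comp_le_sum hinj (g := fun x => kloosterman ψ j k x.2 x.1 ^ 4)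
          fun _ => by positivity)
    _ ≤ Fintype.card F ^ 2 * ((2 * j * k + 1) * Fintype.card Fˣ ^ 2) := by
        rw [Fintype.sum_prod_type, sum_kloosterman_pow_four hψ]
        gcongr
        exact_mod_cast sum_card_powSum_eq_le hj hk hcop
    _ = Fintype.card Fˣ * ((2 * j * k + 1) * (Fintype.card F ^ 2 * Fintype.card Fˣ)) := by ring

end Kloosterman

section SepticCurve

open Finset

variable {F : Type*} [Field F] [Fintype F] [DecidableEq F]

/-- The points with nonzero coordinates of the affine curve `u * v ^ 3 * (u ^ 3 + v ^ 3) = κ`. -/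
def septicCurve (κ : F) : Finset (Fˣ × Fˣ) :=
  {p | (p.1 : F) * p.2 ^ 3 * (p.1 ^ 3 + p.2 ^ 3) = κ}

theorem mem_septicCurve {κ : F} {p : Fˣ × Fˣ} :
    p ∈ septicCurve κ ↔ (p.1 : F) * p.2 ^ 3 * (p.1 ^ 3 + p.2 ^ 3) = κ := by
  simp [septicCurve]

/-- The points of the septic curve whose cubed coordinates lie in the kernel of `ψ`; for the sign
character of the trace these are the points for which `u ^ 3` and `v ^ 3` have trace zero. -/
def traceZeroPoints (ψ : AddChar F ℤ) (κ : F) : Finset (Fˣ × Fˣ) :=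
  {p ∈ septicCurve κ | ψ (p.1 ^ 3) = 1 ∧ ψ (p.2 ^ 3) = 1}

theorem mem_traceZeroPoints {ψ : AddChar F ℤ} {κ : F} {p : Fˣ × Fˣ} :
    p ∈ traceZeroPoints ψ κ ↔ p ∈ septicCurve κ ∧ ψ (p.1 ^ 3) = 1 ∧ ψ (p.2 ^ 3) = 1 :=
  mem_filter

variable [CharP F 2] {ψ : AddChar F ℤ}

theorem exists_conj_of_mem_septicCurve (hcop : (Nat.card Fˣ).Coprime 3) {κ : F} (hκ : κ ≠ 0)
    {u v : Fˣ} (h : (u, v) ∈ septicCurve κ) :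
    ∃ w : Fˣ, (w : F) ^ 3 = u ^ 3 + v ^ 3 ∧ (u, w) ∈ septicCurve κ := by
  rw [mem_septicCurve] at h
  have hne : (u : F) ^ 3 + v ^ 3 ≠ 0 := fun h0 => hκ (by rw [← h, h0, mul_zero])
  obtain ⟨w, hw⟩ := hcop.pow_left_bijective.surjective (Units.mk0 _ hne)
  have hw : (w : F) ^ 3 = u ^ 3 + v ^ 3 := by simpa using congrArg Units.val hw
  refine ⟨w, hw, ?_⟩
  rw [mem_septicCurve, hw, ← h, CharTwo.add_cancel_left]
  ring

theorem sum_septicCurve_conj (hcop : (Nat.card Fˣ).Coprime 3) {κ : F} (hκ : κ ≠ 0) (g : F → ℤ) :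
    ∑ p ∈ septicCurve κ, g (p.1 ^ 3 + p.2 ^ 3) = ∑ p ∈ septicCurve κ, g (p.2 ^ 3) := by
  choose w hw hmem using fun p : septicCurve κ => exists_conj_of_mem_septicCurve hcop hκ p.2
  refine sum_bij (fun p hp => (p.1, w ⟨p, hp⟩)) (fun p hp => hmem ⟨p, hp⟩) ?_ ?_
    fun p hp => by rw [hw]
  · intro p hp p' hp' h
    obtain ⟨hfst, hsnd⟩ := Prod.ext_iff.mp h
    dsimp only at hfst hsnd
    have hcube : (p.1 : F) ^ 3 + p.2 ^ 3 = p'.1 ^ 3 + p'.2 ^ 3 := by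
      rw [← hw ⟨p, hp⟩, ← hw ⟨p', hp'⟩, hsnd]
    rw [hfst] at hcube
    exact Prod.ext hfst (units_val_pow_injective hcop (add_left_cancel hcube))
  · rintro ⟨u, v⟩ hp
    refine ⟨(u, w ⟨_, hp⟩), hmem ⟨_, hp⟩, Prod.ext rfl (units_val_pow_injective hcop ?_)⟩
    simp only [hw, CharTwo.add_cancel_left]

theorem card_pow_add_self_eq (hψ : ψ.IsPrimitive) (hfrob : ∀ x, ψ (x ^ 2) = ψ x) {k : ℕ}
    (hfix : ∀ x : F, x ^ 2 ^ k = x ↔ x = 0 ∨ x = 1) (c : F) :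
    (#{t : F | t ^ 2 ^ k + t = c} : ℤ) = 1 + ψ c := by
  -- Since `ψ` is Frobenius invariant, the sum over `t` is a complete character sum, which vanishes
  -- unless `ρ` is fixed by `k`-fold squaring.
  have hinner (ρ : F) : ∑ t, ψ (ρ ^ 2 ^ k * (t ^ 2 ^ k + t + c)) =
      if ρ = 0 ∨ ρ = 1 then Fintype.card F * ψ (ρ * c) else 0 := by
    have hsplit (t : F) : ψ (ρ ^ 2 ^ k * (t ^ 2 ^ k + t + c)) =
        ψ (t * (ρ ^ 2 ^ k + ρ)) * ψ (ρ ^ 2 ^ k * c) := by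
      rw [mul_add, mul_add, mul_add, ← mul_pow, AddChar.map_add_eq_mul, AddChar.map_add_eq_mul,
        addChar_pow_two_pow hfrob, AddChar.map_add_eq_mul, mul_comm ρ, mul_comm (ρ ^ 2 ^ k) t,
        mul_comm (ψ (t * ρ))]
    rw [sum_congr rfl fun t _ => hsplit t, ← sum_mul, AddChar.sum_mulShift _ hψ]
    simp only [CharTwo.add_eq_zero, ← hfix, Nat.cast_ite, Nat.cast_zero, ite_mul, zero_mul]
    split_ifs with hρ
    · rw [hρ]
    · rfl
  have hcount : (Fintype.card F : ℤ) * #{t : F | t ^ 2 ^ k + t = c} =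
      Fintype.card F * (1 + ψ c) := by
    calc (Fintype.card F : ℤ) * #{t : F | t ^ 2 ^ k + t = c}
        = ∑ t, ∑ l, ψ (l * (t ^ 2 ^ k + t + c)) := by
          simp_rw [AddChar.sum_mulShift _ hψ, CharTwo.add_eq_zero, Nat.cast_ite, Nat.cast_zero]
          rw [← sum_filter, sum_const, nsmul_eq_mul, mul_comm]
      _ = ∑ l, ∑ t, ψ (l * (t ^ 2 ^ k + t + c)) := sum_comm
      _ = ∑ ρ, ∑ t, ψ (ρ ^ 2 ^ k * (t ^ 2 ^ k + t + c)) :=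
          (Fintype.sum_equiv (iterateFrobeniusEquiv F 2 k).toEquiv _ _ fun ρ => by
            simp only [RingEquiv.toEquiv_eq_coe, EquivLike.coe_coe, iterateFrobeniusEquiv_def]).symm
      _ = ∑ ρ ∈ {0, 1}, Fintype.card F * ψ (ρ * c) := by
          rw [sum_congr rfl fun ρ _ => hinner ρ, ← sum_filter]
          congr 1; ext; simp
      _ = Fintype.card F * (1 + ψ c) := by
          rw [sum_pair zero_ne_one, zero_mul, one_mul, AddChar.map_zero_eq_one, mul_add]
  exact mul_left_cancel₀ (by exact_mod_cast Fintype.card_ne_zero) hcount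

theorem card_units_pow_add_self_eq (hψ : ψ.IsPrimitive) (hfrob : ∀ x, ψ (x ^ 2) = ψ x) {k : ℕ}
    (hfix : ∀ x : F, x ^ 2 ^ k = x ↔ x = 0 ∨ x = 1) {c : F} (hc : c ≠ 0) :
    (#{t : Fˣ | (t : F) ^ 2 ^ k + t = c} : ℤ) = 1 + ψ c := by
  rw [← card_pow_add_self_eq hψ hfrob hfix]
  refine congrArg Nat.cast (card_nbij Units.val (fun t ht => ?_) Units.val_injective.injOn ?_)
  · simpa using ht
  · intro x hx
    have hx : x ^ 2 ^ k + x = c := by simpa using hx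
    have hx0 : x ≠ 0 := by rintro rfl; simp [hc.symm] at hx
    exact ⟨Units.mk0 x hx0, by simpa using hx, rfl⟩

theorem card_septicCurve_fst_fiber (hψ : ψ.IsPrimitive) (hfrob : ∀ x, ψ (x ^ 2) = ψ x)
    (hcop : (Nat.card Fˣ).Coprime 3) {κ : F} (hκ : κ ≠ 0) (u : Fˣ) :
    (#{v : Fˣ | (u, v) ∈ septicCurve κ} : ℤ) = 1 + ψ (κ * (u : F)⁻¹ ^ 7) := by
  rw [← card_units_pow_add_self_eq hψ hfrob pow_two_pow_one_eq_self_iff]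
  · refine congrArg Nat.cast (card_equiv ((Equiv.divRight u).trans (powCoprime hcop)) fun v => ?_)
    simp only [mem_filter, mem_univ, true_and, mem_septicCurve, Equiv.trans_apply,
      Equiv.divRight_apply, powCoprime_apply, Units.val_pow_eq_pow_val, Units.val_div_eq_div_val]
    have := u.ne_zero
    field_simp
    grind
  · exact mul_ne_zero hκ (pow_ne_zero _ (inv_ne_zero u.ne_zero))

theorem card_septicCurve_snd_fiber (hψ : ψ.IsPrimitive) (hfrob : ∀ x, ψ (x ^ 2) = ψ x)
    (hcop : (Nat.card Fˣ).Coprime 3) {κ : F} (hκ : κ ≠ 0) (v : Fˣ) :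
    (#{u : Fˣ | (u, v) ∈ septicCurve κ} : ℤ) = 1 + ψ (κ * (v : F)⁻¹ ^ 7) := by
  rw [← card_units_pow_add_self_eq hψ hfrob (pow_two_pow_two_eq_self_iff hcop)]
  · refine congrArg Nat.cast (card_equiv (Equiv.divRight v) fun u => ?_)
    simp only [mem_filter, mem_univ, true_and, mem_septicCurve, Equiv.divRight_apply,
      Units.val_div_eq_div_val]
    have := v.ne_zero
    field_simp
    grind
  · exact mul_ne_zero hκ (pow_ne_zero _ (inv_ne_zero v.ne_zero))

theorem sum_septicCurve_fst (hψ : ψ.IsPrimitive) (hfrob : ∀ x, ψ (x ^ 2) = ψ x)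
    (hcop : (Nat.card Fˣ).Coprime 3) {κ : F} (hκ : κ ≠ 0) (g : Fˣ → ℤ) :
    ∑ p ∈ septicCurve κ, g p.1 = ∑ u : Fˣ, (1 + ψ (κ * (u : F)⁻¹ ^ 7)) * g u := by
  calc ∑ p ∈ septicCurve κ, g p.1
      = ∑ p : Fˣ × Fˣ, if p ∈ septicCurve κ then g p.1 else 0 := by simp
    _ = ∑ u : Fˣ, (1 + ψ (κ * (u : F)⁻¹ ^ 7)) * g u := by
      rw [Fintype.sum_prod_type]
      refine sum_congr rfl fun u _ => ?_
      rw [← card_septicCurve_fst_fiber hψ hfrob hcop hκ, ← sum_filter]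
      simp only [sum_const, nsmul_eq_mul]

theorem sum_septicCurve_snd (hψ : ψ.IsPrimitive) (hfrob : ∀ x, ψ (x ^ 2) = ψ x)
    (hcop : (Nat.card Fˣ).Coprime 3) {κ : F} (hκ : κ ≠ 0) (g : Fˣ → ℤ) :
    ∑ p ∈ septicCurve κ, g p.2 = ∑ v : Fˣ, (1 + ψ (κ * (v : F)⁻¹ ^ 7)) * g v := by
  calc ∑ p ∈ septicCurve κ, g p.2
      = ∑ p : Fˣ × Fˣ, if p ∈ septicCurve κ then g p.2 else 0 := by simp
    _ = ∑ v : Fˣ, (1 + ψ (κ * (v : F)⁻¹ ^ 7)) * g v := by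
      rw [Fintype.sum_prod_type_right]
      refine sum_congr rfl fun v _ => ?_
      rw [← card_septicCurve_snd_fiber hψ hfrob hcop hκ, ← sum_filter]
      simp only [sum_const, nsmul_eq_mul]

theorem four_mul_card_traceZeroPoints (hψ : ψ.IsPrimitive) (hfrob : ∀ x, ψ (x ^ 2) = ψ x)
    (hcop : (Nat.card Fˣ).Coprime 3) {κ : F} (hκ : κ ≠ 0) :
    (4 * #(traceZeroPoints ψ κ) : ℤ) =
      Fintype.card F - 4 + kloosterman ψ 7 3 κ 0 + 3 * kloosterman ψ 7 3 κ 1 := by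
  have hcard : ((#(septicCurve κ) : ℕ) : ℤ) = Fintype.card Fˣ + kloosterman ψ 7 3 κ 0 := by
    have := sum_septicCurve_fst hψ hfrob hcop hκ 1
    simpa [kloosterman, sum_add_distrib] using this
  have hfst : ∑ p ∈ septicCurve κ, ψ (p.1 ^ 3) = -1 + kloosterman ψ 7 3 κ 1 := by
    have h1 := sum_septicCurve_fst hψ hfrob hcop hκ fun u => ψ (u ^ 3)
    have h2 : ∑ u : Fˣ, ψ ((u : F) ^ 3) = -1 := by
      simpa using sum_units_addChar_mul_pow hψ hcop one_ne_zero
    simpa [kloosterman, add_mul, sum_add_distrib, h2, AddChar.map_add_eq_mul] using h1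
  have hsnd : ∑ p ∈ septicCurve κ, ψ (p.2 ^ 3) = -1 + kloosterman ψ 7 3 κ 1 := by
    have h1 := sum_septicCurve_snd hψ hfrob hcop hκ fun u => ψ (u ^ 3)
    have h2 : ∑ u : Fˣ, ψ ((u : F) ^ 3) = -1 := by
      simpa using sum_units_addChar_mul_pow hψ hcop one_ne_zero
    simpa [kloosterman, add_mul, sum_add_distrib, h2, AddChar.map_add_eq_mul] using h1
  have hind (p : Fˣ × Fˣ) : (if ψ (p.1 ^ 3) = 1 ∧ ψ (p.2 ^ 3) = 1 then 4 else 0) =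
      1 + ψ (p.1 ^ 3) + ψ (p.2 ^ 3) + ψ (p.1 ^ 3 + p.2 ^ 3) := by
    rw [AddChar.map_add_eq_mul]
    obtain h | h := mul_self_eq_one_iff.mp (addChar_mul_self ψ (p.1 ^ 3 : F)) <;>
      obtain h' | h' := mul_self_eq_one_iff.mp (addChar_mul_self ψ (p.2 ^ 3 : F)) <;>
      simp [h, h']
  calc (4 * #(traceZeroPoints ψ κ) : ℤ)
      = ∑ p ∈ septicCurve κ, (1 + ψ (p.1 ^ 3) + ψ (p.2 ^ 3) + ψ (p.1 ^ 3 + p.2 ^ 3)) := by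
        simp_rw [← hind]
        rw [← sum_filter, sum_const, nsmul_eq_mul, mul_comm, traceZeroPoints]
    _ = #(septicCurve κ) + (-1 + kloosterman ψ 7 3 κ 1) + 2 * (-1 + kloosterman ψ 7 3 κ 1) := by
        rw [sum_add_distrib, sum_add_distrib, sum_add_distrib, sum_septicCurve_conj hcop hκ,
          hfst, hsnd]
        simp
        ring
    _ = Fintype.card F - 4 + kloosterman ψ 7 3 κ 0 + 3 * kloosterman ψ 7 3 κ 1 := by
        rw [hcard, Fintype.card_units, Nat.cast_sub Fintype.card_pos]
        push_cast
        ring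

theorem card_traceZeroPoints_le_of_card_ge (hψ : ψ.IsPrimitive) (hfrob : ∀ x, ψ (x ^ 2) = ψ x)
    (hcop : (Nat.card Fˣ).Coprime 3) {κ : F} (hκ : κ ≠ 0) (hF : 512 ≤ Fintype.card F) :
    16 * #(traceZeroPoints ψ κ) + 192 ≤ 13 * Fintype.card F := by
  have hq : (512 : ℤ) ≤ Fintype.card F := by exact_mod_cast hF
  have hunits : (Fintype.card Fˣ : ℤ) ≤ Fintype.card F := by
    rw [Fintype.card_units]; exact_mod_cast Nat.sub_le _ _
  have hcard := four_mul_card_traceZeroPoints hψ hfrob hcop hκ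
  have hzero : 16 * kloosterman ψ 7 3 κ 0 ≤ 5 * Fintype.card F := by
    refine le_of_pow_le_pow_left₀ two_ne_zero (by positivity) ?_
    have hgcd : ((Fintype.card Fˣ).gcd 7 : ℤ) ^ 2 ≤ 7 ^ 2 := by
      gcongr; exact_mod_cast Nat.gcd_le_right _ (by norm_num)
    nlinarith [hq, kloosterman_zero_right_sq_le hψ 7 3 hκ]
  have hone : 64 * kloosterman ψ 7 3 κ 1 ≤ 35 * Fintype.card F := by
    refine le_of_pow_le_pow_left₀ four_ne_zero (by positivity) ?_
    calc _ = 64 ^ 4 * kloosterman ψ 7 3 κ 1 ^ 4 := by ring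
      _ ≤ 64 ^ 4 * (43 * ((Fintype.card F : ℤ) ^ 2 * Fintype.card F)) := by
        gcongr
        exact (kloosterman_pow_four_le hψ (by norm_num) (by norm_num) hcop κ one_ne_zero).trans
          (by gcongr; norm_num)
      _ ≤ 35 ^ 4 * ((Fintype.card F : ℤ) ^ 3 * Fintype.card F) := by
        nlinarith [pow_pos (by linarith : (0 : ℤ) < Fintype.card F) 3]
      _ = (35 * Fintype.card F) ^ 4 := by ring
  have hgoal : (16 * #(traceZeroPoints ψ κ) + 192 : ℤ) ≤ 13 * Fintype.card F := by linarith
  exact_mod_cast hgoal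

theorem dvd_card_traceZeroPoints_one {p : ℕ} (hp : p.Prime) (hF : Fintype.card F = 2 ^ p)
    (hfrob : ∀ x, ψ (x ^ 2) = ψ x) : p ∣ #(traceZeroPoints ψ 1) := by
  refine prime_dvd_card_of_iterate_eq hp (f := fun x => x ^ 2) (fun x hx => ?_) (fun x _ => ?_)
    fun x hx hfix => ?_
  · obtain ⟨hcurve, hfst, hsnd⟩ := mem_traceZeroPoints.mp hx
    rw [mem_septicCurve] at hcurve
    simp only [mem_traceZeroPoints, mem_septicCurve, Prod.pow_fst, Prod.pow_snd,
      Units.val_pow_eq_pow_val, pow_right_comm _ 2 3, hfrob, ← CharTwo.add_sq, ← mul_pow, hcurve,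
      hfst, hsnd, one_pow, and_self]
  · rw [pow_iterate, ← hF]
    ext <;> simp [FiniteField.pow_card]
  · have hx1 : x = 1 := by simpa [sq] using hfix
    simp [hx1, mem_traceZeroPoints, mem_septicCurve, CharTwo.add_self_eq_zero] at hx

theorem card_traceZeroPoints_le_of_card_eq (hψ : ψ.IsPrimitive) (hfrob : ∀ x, ψ (x ^ 2) = ψ x)
    {κ : F} (hκ : κ ≠ 0) (hF : Fintype.card F = 128) : #(traceZeroPoints ψ κ) ≤ 92 := by
  have hunits : Fintype.card Fˣ = 127 := by rw [Fintype.card_units, hF]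
  have hcop (k : ℕ) (hk : Nat.Coprime 127 k) : (Nat.card Fˣ).Coprime k := by
    rwa [Nat.card_eq_fintype_card, hunits]
  have hcard : (4 * #(traceZeroPoints ψ κ) : ℤ) = 123 + 3 * kloosterman ψ 7 3 κ 1 := by
    rw [four_mul_card_traceZeroPoints hψ hfrob (hcop 3 (by norm_num)) hκ,
      kloosterman_zero_right hψ (hcop 7 (by norm_num)) 3 hκ, hF]
    norm_num
  obtain rfl | hκ₁ := eq_or_ne κ 1
  · have hfour := kloosterman_pow_four_le hψ (j := 7) (k := 3) (by norm_num) (by norm_num)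
      (hcop 3 (by norm_num)) 1 one_ne_zero
    rw [hF, hunits] at hfour
    have hle : kloosterman ψ 7 3 1 1 < 98 :=
      lt_of_pow_lt_pow_left₀ 4 (by norm_num) (hfour.trans_lt (by norm_num))
    have hdvd : 7 ∣ #(traceZeroPoints ψ 1) :=
      dvd_card_traceZeroPoints_one (by norm_num) (by rw [hF]; norm_num) hfrob
    omega
  · have hsq := mul_kloosterman_sq_le (p := 7) (by norm_num) (by rw [hF]; norm_num) hψ hfrob 7 3
      hκ hκ₁
    rw [hF, hunits] at hsq
    have hle : kloosterman ψ 7 3 κ 1 < 49 :=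
      lt_of_pow_lt_pow_left₀ 2 (by norm_num) (by norm_num at hsq; linarith)
    omega

theorem card_traceZeroPoints_le (hψ : ψ.IsPrimitive) (hfrob : ∀ x, ψ (x ^ 2) = ψ x)
    (hcop : (Nat.card Fˣ).Coprime 3) {κ : F} (hκ : κ ≠ 0)
    (hF : Fintype.card F = 128 ∨ 512 ≤ Fintype.card F) :
    16 * #(traceZeroPoints ψ κ) + 192 ≤ 13 * Fintype.card F := by
  obtain hF | hF := hF
  · have := card_traceZeroPoints_le_of_card_eq hψ hfrob hκ hF
    omega
  · exact card_traceZeroPoints_le_of_card_ge hψ hfrob hcop hκ hF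

end SepticCurve

section Moore

variable {R : Type*} [CommRing R]

/-- The Moore determinant of two elements over `𝔽₂`. -/
def moore₂ (x y : R) : R := x * y ^ 2 + x ^ 2 * y

theorem moore₂_comm (x y : R) : moore₂ x y = moore₂ y x := by
  unfold moore₂; ring

theorem moore₂_mul_left (c x y : R) : moore₂ (c * x) (c * y) = c ^ 3 * moore₂ x y := by
  unfold moore₂; ring

/-- The Moore determinant of three elements over `𝔽₂`, expanded along the first one. -/
def moore₃ (x y z : R) : R :=
  x * moore₂ (y ^ 2) (z ^ 2) + x ^ 2 * (y * z ^ 4 + y ^ 4 * z) + x ^ 4 * moore₂ y z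

end Moore

section ArtinSchreier

open Finset Module Submodule

variable {F : Type*} [Field F] [Algebra (ZMod 2) F]

variable (F) in
/-- The Artin–Schreier map `x ↦ x ^ 2 + x`, as an `𝔽₂`-linear map. -/
def artinSchreier : F →ₗ[ZMod 2] F :=
  (FiniteField.frobeniusAlgHom (ZMod 2) F).toLinearMap + LinearMap.id

theorem artinSchreier_apply (x : F) : artinSchreier F x = x ^ 2 + x := by
  simp [artinSchreier, FiniteField.frobeniusAlgHom_apply]

/-- The linear map `x ↦ c⁻¹ * ℘ (β⁻¹ * ℘ x)`, where `℘` is the Artin–Schreier map. It carries the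
trivariate Moore determinant `moore₃ β (℘ x) (℘ y)` to the bivariate one, up to a factor. -/
def doubleArtinSchreier (β c : F) : F →ₗ[ZMod 2] F :=
  LinearMap.mulLeft _ c⁻¹ ∘ₗ artinSchreier F ∘ₗ LinearMap.mulLeft _ β⁻¹ ∘ₗ artinSchreier F

theorem doubleArtinSchreier_apply (β c x : F) : doubleArtinSchreier β c x =
    c⁻¹ * artinSchreier F (β⁻¹ * artinSchreier F x) := rfl

theorem one_mem_range_doubleArtinSchreier_iff {β c : F} (hc : c ≠ 0) :
    1 ∈ (doubleArtinSchreier β c).range ↔ ∃ x, artinSchreier F (β⁻¹ * artinSchreier F x) = c := by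
  simp [doubleArtinSchreier_apply, inv_mul_eq_one₀ hc, eq_comm]

variable (F) in
/-- The additive character `x ↦ (-1) ^ Tr x`. -/
def traceSign : AddChar F ℤ :=
  (AddChar.zmodChar 2 (ζ := (-1 : ℤ)) (by norm_num)).compAddMonoidHom
    (Algebra.trace (ZMod 2) F).toAddMonoidHom

variable (F) in
/-- The symmetric bilinear form `(x, y) ↦ Tr (x * y ^ 2 + x ^ 2 * y)`. -/
def mooreForm : LinearMap.BilinForm (ZMod 2) F :=
  (Algebra.traceForm (ZMod 2) F).compRight (FiniteField.frobeniusAlgHom (ZMod 2) F).toLinearMap +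
    (Algebra.traceForm (ZMod 2) F).compLeft (FiniteField.frobeniusAlgHom (ZMod 2) F).toLinearMap

theorem traceSign_eq_one_iff (x : F) : traceSign F x = 1 ↔ Algebra.trace (ZMod 2) F x = 0 := by
  have h (t : ZMod 2) : (-1 : ℤ) ^ t.val = 1 ↔ t = 0 := by decide +revert
  exact h _

theorem mooreForm_apply (x y : F) :
    mooreForm F x y = Algebra.trace (ZMod 2) F (moore₂ x y) := by
  simp [mooreForm, moore₂, FiniteField.frobeniusAlgHom_apply]

theorem mooreForm_isSymm : (mooreForm F).IsSymm :=
  ⟨fun x y => by rw [mooreForm_apply, moore₂_comm, ← mooreForm_apply]⟩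

section CharTwo

variable [CharP F 2]

theorem artinSchreier_eq_iff {x y : F} :
    artinSchreier F x = artinSchreier F y ↔ x = y ∨ x = y + 1 := by
  rw [artinSchreier_apply, artinSchreier_apply]
  grind

theorem artinSchreier_eq_zero_iff {x : F} : artinSchreier F x = 0 ↔ x = 0 ∨ x = 1 := by
  simpa using artinSchreier_eq_iff (x := x) (y := 0)

theorem finrank_ker_doubleArtinSchreier_le {b c : F} (hb : artinSchreier F b ≠ 0)
    (hc : c ≠ 0) :
    finrank (ZMod 2) (doubleArtinSchreier (artinSchreier F b) c).ker ≤ 2 := by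
  classical
  have hker : (doubleArtinSchreier (artinSchreier F b) c).ker ≤
      span (ZMod 2) (({1, b} : Finset F) : Set F) := by
    intro x hx
    have h0 : (artinSchreier F b)⁻¹ * artinSchreier F x = 0 ∨
        (artinSchreier F b)⁻¹ * artinSchreier F x = 1 :=
      artinSchreier_eq_zero_iff.mp
        ((mul_eq_zero.mp hx).resolve_left (inv_ne_zero hc))
    have h1mem : (1 : F) ∈ span (ZMod 2) (({1, b} : Finset F) : Set F) := subset_span (by simp)
    have hbmem : b ∈ span (ZMod 2) (({1, b} : Finset F) : Set F) := subset_span (by simp)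
    obtain h | h := h0
    · obtain rfl | rfl :=
        artinSchreier_eq_zero_iff.mp ((mul_eq_zero.mp h).resolve_left (inv_ne_zero hb))
      · exact zero_mem _
      · exact h1mem
    · obtain rfl | rfl := artinSchreier_eq_iff.mp ((inv_mul_eq_one₀ hb).mp h).symm
      · exact hbmem
      · exact add_mem hbmem h1mem
  calc _ ≤ finrank (ZMod 2) (span (ZMod 2) (({1, b} : Finset F) : Set F)) :=
        finrank_mono hker
    _ ≤ #({1, b} : Finset F) := finrank_span_finset_le_card _
    _ ≤ 2 := card_le_two

theorem moore₂_doubleArtinSchreier {β : F} (hβ : β ≠ 0) (c x y : F) :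
    moore₂ (doubleArtinSchreier β c x) (doubleArtinSchreier β c y) =
      c⁻¹ ^ 3 * β⁻¹ ^ 7 * moore₃ β (artinSchreier F x) (artinSchreier F y) := by
  rw [doubleArtinSchreier_apply, doubleArtinSchreier_apply, moore₂_mul_left, mul_assoc]
  congr 1
  generalize artinSchreier F x = x'
  generalize artinSchreier F y = y'
  rw [artinSchreier_apply, artinSchreier_apply]
  unfold moore₃ moore₂
  grind

end CharTwo

variable [Finite F]

theorem trace_sq (x : F) :
    Algebra.trace (ZMod 2) F (x ^ 2) = Algebra.trace (ZMod 2) F x := by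
  simpa using Algebra.trace_eq_of_algEquiv (FiniteField.frobeniusAlgEquivOfAlgebraic (ZMod 2) F) x

theorem trace_artinSchreier (x : F) : Algebra.trace (ZMod 2) F (artinSchreier F x) = 0 := by
  rw [artinSchreier_apply, map_add, trace_sq, CharTwo.add_self_eq_zero]

theorem traceSign_sq (x : F) : traceSign F (x ^ 2) = traceSign F x :=
  congrArg (AddChar.zmodChar 2 (ζ := (-1 : ℤ)) (by norm_num)) (trace_sq x)

theorem traceSign_isPrimitive : (traceSign F).IsPrimitive := by
  intro a ha hone
  refine ha ((traceForm_nondegenerate (ZMod 2) F).1 a fun x => ?_)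
  rw [Algebra.traceForm_apply, ← traceSign_eq_one_iff]
  exact DFunLike.congr_fun hone x

theorem mem_orthogonal_top_mooreForm [CharP F 2] (hcop : (Nat.card Fˣ).Coprime 3) {z : F} :
    z ∈ (mooreForm F).orthogonal ⊤ ↔ z = 0 ∨ z = 1 := by
  have htrace (w : F) : mooreForm F w z = Algebra.trace (ZMod 2) F ((z ^ 2 ^ 2 + z) * w ^ 2) := by
    rw [mooreForm_apply, moore₂, map_add, ← trace_sq (w * z ^ 2), ← map_add]
    ring_nf
  rw [← pow_two_pow_two_eq_self_iff hcop, LinearMap.BilinForm.mem_orthogonal_iff]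
  constructor
  · intro hz
    refine CharTwo.add_eq_zero.mp
      ((traceForm_nondegenerate (ZMod 2) F).1 _ fun x => ?_)
    obtain ⟨w, rfl⟩ := (FiniteField.frobeniusAlgEquivOfAlgebraic (ZMod 2) F).surjective x
    exact (htrace w).symm.trans (hz w mem_top)
  · intro hz w _
    rw [htrace, CharTwo.add_eq_zero.mpr hz, zero_mul, map_zero]

theorem natCard_comap_orthogonal_range_le [CharP F 2] (hcop : (Nat.card Fˣ).Coprime 3) {b c : F}
    (hb : artinSchreier F b ≠ 0) (hc : c ≠ 0)
    (h1 : 1 ∉ (doubleArtinSchreier (artinSchreier F b) c).range) :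
    Nat.card (((mooreForm F).orthogonal (doubleArtinSchreier (artinSchreier F b) c).range).comap
      (doubleArtinSchreier (artinSchreier F b) c)) ≤ 8 := by
  set L := doubleArtinSchreier (artinSchreier F b) c
  have hrad : (mooreForm F).orthogonal ⊤ ≠ ⊥ := (Submodule.ne_bot_iff _).mpr
    ⟨1, (mem_orthogonal_top_mooreForm hcop).mpr (Or.inr rfl), one_ne_zero⟩
  have hdisj : Disjoint L.range ((mooreForm F).orthogonal ⊤) := by
    refine Submodule.disjoint_def.mpr fun z hz hrad => ?_
    refine ((mem_orthogonal_top_mooreForm hcop).mp hrad).resolve_right ?_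
    rintro rfl
    exact h1 hz
  have hlt := finrank_comap_orthogonal_range_lt mooreForm_isSymm.isRefl L hrad hdisj
  have hker : finrank (ZMod 2) L.ker ≤ 2 := finrank_ker_doubleArtinSchreier_le hb hc
  rw [natCard_eq_pow_finrank (K := ZMod 2), Nat.card_zmod]
  exact Nat.pow_le_pow_right two_pos (by omega : _ ≤ 3)

end ArtinSchreier

section DoubleCounting

open Finset

variable {F : Type*} [Field F] [Algebra (ZMod 2) F] [CharP F 2] [Fintype F] [DecidableEq F]

theorem exists_mem_traceZeroPoints_of_one_mem_range (hcop : (Nat.card Fˣ).Coprime 3)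
    {κ : F} (hκ : κ ≠ 0) {b : F} {u : Fˣ} (hu : (u : F) ^ 3 = artinSchreier F b)
    (h : 1 ∈ (doubleArtinSchreier (artinSchreier F b) (κ / u ^ 7)).range) :
    ∃ v : Fˣ, (u, v) ∈ traceZeroPoints (traceSign F) κ := by
  have hu0 : (u : F) ≠ 0 := u.ne_zero
  obtain ⟨x, hx⟩ := (one_mem_range_doubleArtinSchreier_iff
    (div_ne_zero hκ (pow_ne_zero 7 hu0))).mp h
  have hx0 : artinSchreier F x ≠ 0 := fun h0 => by
    rw [h0, mul_zero, map_zero] at hx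
    exact div_ne_zero hκ (pow_ne_zero 7 hu0) hx.symm
  obtain ⟨v, hv⟩ := hcop.pow_left_bijective.surjective (Units.mk0 _ hx0)
  have hv : (v : F) ^ 3 = artinSchreier F x := by simpa using congrArg Units.val hv
  refine ⟨v, mem_traceZeroPoints.mpr ⟨mem_septicCurve.mpr ?_, ?_, ?_⟩⟩
  · rw [← hu, ← hv, artinSchreier_apply] at hx
    field_simp at hx
    grind
  · rw [hu, traceSign_eq_one_iff, trace_artinSchreier]
  · rw [hv, traceSign_eq_one_iff, trace_artinSchreier]

theorem card_le_card_traceZeroPoints (hcop : (Nat.card Fˣ).Coprime 3) {κ : F}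
    (hκ : κ ≠ 0) {ψ : AddChar F ℤ} {S : Finset F}
    (hS : ∀ b ∈ S, ∃ p ∈ traceZeroPoints ψ κ, (p.1 : F) ^ 3 = artinSchreier F b) :
    #S ≤ #(traceZeroPoints ψ κ) := by
  let r (b : F) (p : Fˣ × Fˣ) : Prop := (p.1 : F) ^ 3 = artinSchreier F b
  refine Nat.le_of_mul_le_mul_right (card_mul_le_card_mul r (m := 2) (n := 2) ?_ ?_) two_pos
  · intro b hb
    obtain ⟨⟨u, v⟩, hp, hu⟩ := hS b hb
    obtain ⟨hcurve, hψu, hψv⟩ := mem_traceZeroPoints.mp hp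
    obtain ⟨w, hw, hconj⟩ := exists_conj_of_mem_septicCurve hcop hκ hcurve
    have hwmem : (u, w) ∈ traceZeroPoints ψ κ :=
      mem_traceZeroPoints.mpr ⟨hconj, hψu, by rw [hw, AddChar.map_add_eq_mul, hψu, hψv, one_mul]⟩
    have hne : v ≠ w := by
      rintro rfl
      exact pow_ne_zero 3 u.ne_zero (right_eq_add.mp hw)
    refine (card_pair (Prod.mk_right_injective u |>.ne hne)).ge.trans (card_le_card ?_)
    simp [insert_subset_iff, bipartiteAbove, r, hp, hwmem, hu]
  · intro p _
    obtain hempty | ⟨b, hb⟩ := (bipartiteBelow r S p).eq_empty_or_nonempty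
    · simp [hempty]
    · refine (card_le_card fun b' hb' => ?_).trans (card_le_two (a := b) (b := b + 1))
      rw [mem_insert, mem_singleton, ← artinSchreier_eq_iff]
      exact ((mem_bipartiteBelow r).mp hb').2.symm.trans ((mem_bipartiteBelow r).mp hb).2

end DoubleCounting

section LinearKernel

open Finset Submodule

variable {n : ℕ} {f : Fq n → ZMod 2}

theorem der_tr_pow_fifteen (hf : ∀ x, f x = tr (x ^ 15)) (a b x y : Fq n) :
    der (der (der f a) (a * b)) (a * x) 0 + der (der (der f a) (a * b)) (a * x) (a * y) =
      tr (a ^ 15 * moore₃ (artinSchreier _ b) (artinSchreier _ x) (artinSchreier _ y)) := by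
  simp only [der, hf, tr, ← map_add, artinSchreier_apply]
  congr 1
  unfold moore₃ moore₂
  grind

theorem linKer_subset (hf : ∀ x, f x = tr (x ^ 15)) {a : Fq n} (ha : a ≠ 0) {b : Fq n}
    {u : (Fq n)ˣ} (hu : (u : Fq n) ^ 3 = artinSchreier _ b) :
    let L := doubleArtinSchreier (artinSchreier (Fq n) b) (a⁻¹ ^ 5 / u ^ 7)
    linKer (der (der f a) (a * b)) ⊆
      (a * ·) '' ((mooreForm (Fq n)).orthogonal L.range).comap L := by
  intro L e he
  obtain ⟨k, hk⟩ := he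
  refine ⟨a⁻¹ * e, ?_, mul_inv_cancel_left₀ ha e⟩
  rw [SetLike.mem_coe, mem_comap, LinearMap.BilinForm.mem_orthogonal_iff]
  rintro _ ⟨y, rfl⟩
  have hcoeff : (a⁻¹ ^ 5 / (u : Fq n) ^ 7)⁻¹ ^ 3 * (artinSchreier (Fq n) b)⁻¹ ^ 7 = a ^ 15 := by
    rw [← hu]
    have := u.ne_zero
    field_simp
  have hder := der_tr_pow_fifteen hf a b (a⁻¹ * e) y
  rw [mul_inv_cancel_left₀ ha, hk, hk, CharTwo.add_self_eq_zero, tr] at hder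
  rw [mooreForm_isSymm.eq, mooreForm_apply,
    moore₂_doubleArtinSchreier (hu ▸ pow_ne_zero 3 u.ne_zero), hcoeff, ← hder]

theorem exists_mem_traceZeroPoints [Fintype (Fq n)] [DecidableEq (Fq n)]
    (hf : ∀ x, f x = tr (x ^ 15)) {a : Fq n} (ha : a ≠ 0) (hcop : (Nat.card (Fq n)ˣ).Coprime 3)
    {b : Fq n} (hb₀ : b ≠ 0) (hb₁ : b ≠ 1) (hlarge : 8 < (linKer (der (der f a) (a * b))).ncard) :
    ∃ p ∈ traceZeroPoints (traceSign (Fq n)) (a⁻¹ ^ 5), (p.1 : Fq n) ^ 3 = artinSchreier _ b := by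
  have hb : artinSchreier (Fq n) b ≠ 0 := fun h => (artinSchreier_eq_zero_iff.mp h).elim hb₀ hb₁
  have hκ : a⁻¹ ^ 5 ≠ 0 := pow_ne_zero 5 (inv_ne_zero ha)
  obtain ⟨u, hu⟩ := hcop.pow_left_bijective.surjective (Units.mk0 _ hb)
  have hu : (u : Fq n) ^ 3 = artinSchreier (Fq n) b := by simpa using congrArg Units.val hu
  suffices h1 : 1 ∈ (doubleArtinSchreier (artinSchreier (Fq n) b) (a⁻¹ ^ 5 / u ^ 7)).range by
    obtain ⟨v, hv⟩ := exists_mem_traceZeroPoints_of_one_mem_range hcop hκ hu h1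
    exact ⟨(u, v), hv, hu⟩
  by_contra h1
  refine hlarge.not_ge ?_
  calc _ ≤ _ := Set.ncard_le_ncard (linKer_subset hf ha hu)
    _ ≤ _ := Set.ncard_image_le
    _ ≤ 8 := natCard_comap_orthogonal_range_le hcop hb
      (div_ne_zero hκ (pow_ne_zero 7 u.ne_zero)) h1

theorem card_le_ncard_linKer_le_eight_add [Fintype (Fq n)] [DecidableEq (Fq n)]
    (hf : ∀ x, f x = tr (x ^ 15)) {a : Fq n} (ha : a ≠ 0) (hcop : (Nat.card (Fq n)ˣ).Coprime 3) :
    Fintype.card (Fq n) ≤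
      {b : Fq n | b ≠ 0 ∧ b ≠ 1 ∧ (linKer (der (der f a) (a * b))).ncard ≤ 8}.ncard +
        #(traceZeroPoints (traceSign (Fq n)) (a⁻¹ ^ 5)) + 2 := by
  classical
  let small (b : Fq n) : Prop := (linKer (der (der f a) (a * b))).ncard ≤ 8
  have hlarge : #(filter (¬small ·) {0, 1}ᶜ) ≤
      #(traceZeroPoints (traceSign (Fq n)) (a⁻¹ ^ 5)) :=
    card_le_card_traceZeroPoints hcop (pow_ne_zero 5 (inv_ne_zero ha)) fun b hb => by
      simp only [mem_filter, mem_compl, mem_insert, mem_singleton, not_or, small, not_le] at hb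
      exact exists_mem_traceZeroPoints hf ha hcop hb.1.1 hb.1.2 hb.2
  have hset : {b : Fq n | b ≠ 0 ∧ b ≠ 1 ∧ small b} = (filter small {0, 1}ᶜ : Finset (Fq n)) := by
    ext; simp [and_assoc]
  have hsplit := card_filter_add_card_filter_not (s := ({0, 1}ᶜ : Finset (Fq n))) small
  rw [card_compl, card_pair zero_ne_one] at hsplit
  rw [hset, Set.ncard_coe_finset]
  omega

theorem card_units_Fq_coprime_three (hodd : Odd n) : (Nat.card (Fq n)ˣ).Coprime 3 := by
  rw [Nat.card_units, GaloisField.card 2 n hodd.pos.ne']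
  obtain ⟨m, rfl⟩ := hodd
  have hmod : (2 ^ 2) ^ m % 3 = 1 := by rw [Nat.pow_mod]; simp
  refine (Nat.prime_three.coprime_iff_not_dvd.mpr ?_).symm
  rw [pow_succ, pow_mul]
  generalize (2 ^ 2) ^ m = k at hmod
  omega

end LinearKernel

/-- Odd `n ≥ 7`: many `b` give a small linear kernel for the second derivative
of `tr(x^15)`. -/
theorem count_b_small_linKer (n : ℕ) (hn : 7 ≤ n) (hodd : Odd n)
    (f : Fq n → ZMod 2) (hf : ∀ x, f x = tr (x ^ 15))
    (a : Fq n) (ha : a ≠ 0) :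
    ({b : Fq n | b ≠ 0 ∧ b ≠ 1 ∧
        (linKer (der (der f a) (a * b))).ncard ≤ 8}.ncard : ℝ)
      ≥ 3 * (2:ℝ) ^ ((n:ℝ) - 4) + 10 := by
  classical
  have := Fintype.ofFinite (Fq n)
  have hcard : Fintype.card (Fq n) = 2 ^ n := by
    rw [← Nat.card_eq_fintype_card, GaloisField.card 2 n (by omega)]
  have hq : Fintype.card (Fq n) = 128 ∨ 512 ≤ Fintype.card (Fq n) := by
    obtain rfl | hn9 : n = 7 ∨ 9 ≤ n := by grind
    · exact Or.inl hcard
    · exact Or.inr (hcard ▸ Nat.pow_le_pow_right two_pos hn9)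
  have hcop := card_units_Fq_coprime_three hodd
  have hcount := card_le_ncard_linKer_le_eight_add hf ha hcop
  have hcurve := card_traceZeroPoints_le traceSign_isPrimitive traceSign_sq hcop
    (pow_ne_zero 5 (inv_ne_zero ha)) hq
  obtain ⟨m, rfl⟩ : ∃ m, n = m + 4 := ⟨n - 4, by omega⟩
  rw [hcard, pow_add] at hcount hcurve
  rw [Nat.cast_add, Nat.cast_ofNat, add_sub_cancel_right, Real.rpow_natCast]
  have hnat : 3 * 2 ^ m + 10 ≤ {b : Fq (m + 4) | b ≠ 0 ∧ b ≠ 1 ∧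
      (linKer (der (der f a) (a * b))).ncard ≤ 8}.ncard := by omega
  exact_mod_cast hnat
end
end

section
/- Let n ≥ 6 be an integer, and define the real sequence (l_k)_{k ≥ 3} by l_3 = (1/2)·√((2^n − 1)·√(2^{3n/2 + 3} + 3·2^{n+1} − 2^{n/2 + 3} + 16) + 2^n) and l_{k+1} = √((2^n − 1)·(l_k + 1) + 2^{n−2}) for k ≥ 3. Then for every integer r with 3 ≤ r ≤ n − 3, one has l_r ≤ 2^{(1 − 2^{−r})·n − 2^{−(r−1)}} + 3·2^{(1/2 − 2^{−r})·n}. -/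
/-!
Write `N = 2 ^ n` and `s = 2 ^ (-r)`, so that the claimed bound is `A s + 3 * B s` with
`A s = 2 ^ ((1 - s) * n - 2 * s)` and `B s = 2 ^ ((1 / 2 - s) * n)`. Halving `s` solves the
dominant part of the recursion exactly: `A (s / 2) ^ 2 = N * A s`. The remaining terms are
absorbed by the cross term of `(A (s / 2) + 3 * B (s / 2)) ^ 2`, since
`A (s / 2) * B (s / 2) = 2 ^ (-s) * (N * B s)` and `2 ^ (-s)` is close to `1`.
The prescribed value of `l 3` is itself one step of the recursion, from a fictitious `l 2` that
already satisfies the bound for `r = 2`.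
-/

/-- The recursion of Carlet's bound, sending `l k` to `l (k + 1)`. -/
noncomputable def carletStep (n x : ℝ) : ℝ :=
  √((2 ^ n - 1) * (x + 1) + 2 ^ (n - 2))

/-- The fictitious value `l 2` that `carletStep` maps to the prescribed `l 3`. -/
noncomputable def carletInit (n : ℝ) : ℝ :=
  √(2 ^ (3 * n / 2 + 3) + 3 * 2 ^ (n + 1) - 2 ^ (n / 2 + 3) + 16) / 4 - 1

/-- The dominant term of the upper bound for `l r`, as a function of `s = 2 ^ (-r)`. -/
noncomputable def leadingTerm (n s : ℝ) : ℝ :=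
  2 ^ ((1 - s) * n - 2 * s)

/-- The lower-order term of the upper bound for `l r`, without its coefficient `3`, as a function
of `s = 2 ^ (-r)`. -/
noncomputable def correctionTerm (n s : ℝ) : ℝ :=
  2 ^ ((1 / 2 - s) * n)

lemma leadingTerm_pos (n s : ℝ) : 0 < leadingTerm n s :=
  Real.rpow_pos_of_pos two_pos _

lemma correctionTerm_pos (n s : ℝ) : 0 < correctionTerm n s :=
  Real.rpow_pos_of_pos two_pos _

lemma one_le_correctionTerm {n s : ℝ} (hn : 0 ≤ n) (hs : s ≤ 1 / 2) :
    1 ≤ correctionTerm n s :=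
  Real.one_le_rpow one_le_two (mul_nonneg (sub_nonneg.2 hs) hn)

lemma leadingTerm_half_sq (n s : ℝ) : leadingTerm n (s / 2) ^ 2 = 2 ^ n * leadingTerm n s := by
  unfold leadingTerm
  rw [← Real.rpow_mul_natCast zero_le_two, ← Real.rpow_add two_pos]
  congr 1
  push_cast
  ring

lemma two_rpow_mul_correctionTerm (n s : ℝ) :
    2 ^ n * correctionTerm n s = 2 ^ s * (leadingTerm n (s / 2) * correctionTerm n (s / 2)) := by
  unfold leadingTerm correctionTerm
  simp only [← Real.rpow_add two_pos]
  congr 1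
  ring

lemma two_rpow_le_five_fourths {s : ℝ} (hs : s ≤ 1 / 4) : (2 : ℝ) ^ s ≤ 5 / 4 := by
  have bernoulli : (1 + 1 : ℝ) ^ (1 / 4 : ℝ) ≤ 1 + 1 / 4 * 1 :=
    rpow_one_add_le_one_add_mul_self (by norm_num) (by norm_num) (by norm_num)
  calc (2 : ℝ) ^ s ≤ 2 ^ (1 / 4 : ℝ) := Real.rpow_le_rpow_of_exponent_le one_le_two hs
    _ ≤ 5 / 4 := by norm_num at bernoulli ⊢; exact bernoulli

lemma two_rpow_sub_two (n : ℝ) : (2 : ℝ) ^ (n - 2) = 2 ^ n / 4 := by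
  rw [Real.rpow_sub two_pos]
  norm_num

lemma two_rpow_neg_sub_one (x : ℝ) : (2 : ℝ) ^ (-(x - 1)) = 2 * 2 ^ (-x) := by
  rw [neg_sub, sub_eq_add_neg, Real.rpow_add two_pos, Real.rpow_one]

lemma carletStep_le_of_le {n s x : ℝ} (hn : 0 ≤ n) (hs : s ≤ 1 / 4)
    (hx : x ≤ leadingTerm n s + 3 * correctionTerm n s) :
    carletStep n x ≤ leadingTerm n (s / 2) + 3 * correctionTerm n (s / 2) := by
  have hA := leadingTerm_pos n s
  have hA' := leadingTerm_pos n (s / 2)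
  have hB' := correctionTerm_pos n (s / 2)
  have hB : 1 ≤ correctionTerm n s := one_le_correctionTerm hn (by linarith)
  have hN : (1 : ℝ) ≤ 2 ^ n := Real.one_le_rpow one_le_two hn
  have hNB : (2 : ℝ) ^ n ≤ 2 ^ n * correctionTerm n s := le_mul_of_one_le_right (by positivity) hB
  have cross : 2 ^ n * correctionTerm n s
      ≤ 5 / 4 * (leadingTerm n (s / 2) * correctionTerm n (s / 2)) := by
    rw [two_rpow_mul_correctionTerm]
    gcongr
    exact two_rpow_le_five_fourths hs
  refine Real.sqrt_le_iff.2 ⟨by positivity, ?_⟩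
  calc (2 ^ n - 1) * (x + 1) + 2 ^ (n - 2)
      ≤ (2 ^ n - 1) * (leadingTerm n s + 3 * correctionTerm n s + 1) + 2 ^ n / 4 := by
        rw [two_rpow_sub_two]
        gcongr
    _ ≤ 2 ^ n * leadingTerm n s + 17 / 4 * (2 ^ n * correctionTerm n s) := by linarith
    _ ≤ leadingTerm n (s / 2) ^ 2 + 6 * (leadingTerm n (s / 2) * correctionTerm n (s / 2)) := by
        rw [leadingTerm_half_sq]
        linarith [mul_pos hA' hB']
    _ ≤ (leadingTerm n (s / 2) + 3 * correctionTerm n (s / 2)) ^ 2 := by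
        linarith [sq_nonneg (correctionTerm n (s / 2))]

lemma carletInit_le (n : ℝ) :
    carletInit n ≤ leadingTerm n (1 / 4) + 3 * correctionTerm n (1 / 4) := by
  have hA := leadingTerm_pos n (1 / 4)
  have hB := correctionTerm_pos n (1 / 4)
  have leading_sq : (2 : ℝ) ^ (3 * n / 2 + 3) = 16 * leadingTerm n (1 / 4) ^ 2 := by
    rw [leadingTerm, ← Real.rpow_mul_natCast zero_le_two,
      show (16 : ℝ) = 2 ^ (4 : ℝ) by norm_num, ← Real.rpow_add two_pos]
    congr 1
    push_cast
    ring
  have cross : (2 : ℝ) ^ (n + 1) ≤ 4 * (leadingTerm n (1 / 4) * correctionTerm n (1 / 4)) := by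
    rw [leadingTerm, correctionTerm, show (4 : ℝ) = 2 ^ (2 : ℝ) by norm_num]
    simp only [← Real.rpow_add two_pos]
    exact Real.rpow_le_rpow_of_exponent_le one_le_two (by linarith)
  have half_pos : (0 : ℝ) < 2 ^ (n / 2 + 3) := by positivity
  suffices √(2 ^ (3 * n / 2 + 3) + 3 * 2 ^ (n + 1) - 2 ^ (n / 2 + 3) + 16)
      ≤ 4 * (leadingTerm n (1 / 4) + 3 * correctionTerm n (1 / 4) + 1) by
    unfold carletInit
    linarith
  refine Real.sqrt_le_iff.2 ⟨by positivity, ?_⟩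
  rw [leading_sq]
  nlinarith [mul_pos hA hB]

lemma carletStep_carletInit (n : ℝ) :
    carletStep n (carletInit n) = (1 / 2) * √((2 ^ n - 1) *
      √(2 ^ (3 * n / 2 + 3) + 3 * 2 ^ (n + 1) - 2 ^ (n / 2 + 3) + 16) + 2 ^ n) := by
  have half_eq_sqrt : (1 / 2 : ℝ) = √(1 / 4) := by
    rw [show (1 / 4 : ℝ) = (1 / 2) ^ 2 by norm_num, Real.sqrt_sq (by norm_num)]
  rw [half_eq_sqrt, ← Real.sqrt_mul (by norm_num), carletStep, carletInit, two_rpow_sub_two]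
  ring_nf

theorem l_seq_upper_bound_general (n : ℝ) (hn : 0 ≤ n) (l : ℕ → ℝ)
    (h3 : l 3 = (1 / 2) * √((2 ^ n - 1) *
      √(2 ^ (3 * n / 2 + 3) + 3 * 2 ^ (n + 1) - 2 ^ (n / 2 + 3) + 16) + 2 ^ n))
    (hrec : ∀ k : ℕ, 3 ≤ k → l (k + 1) = √((2 ^ n - 1) * (l k + 1) + 2 ^ (n - 2)))
    (r : ℕ) (hr : 3 ≤ r) :
    l r ≤ 2 ^ ((1 - 2 ^ (-(r : ℝ))) * n - 2 ^ (-((r : ℝ) - 1)))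
      + 3 * 2 ^ ((1 / 2 - 2 ^ (-(r : ℝ))) * n) := by
  rw [two_rpow_neg_sub_one]
  change l r ≤ leadingTerm n (2 ^ (-(r : ℝ))) + 3 * correctionTerm n (2 ^ (-(r : ℝ)))
  induction r, hr using Nat.le_induction with
  | base =>
    have base_exponent : (2 : ℝ) ^ (-((3 : ℕ) : ℝ)) = 1 / 4 / 2 := by
      rw [Real.rpow_neg zero_le_two, Real.rpow_natCast]
      norm_num
    rw [h3, ← carletStep_carletInit, base_exponent]
    exact carletStep_le_of_le hn le_rfl (carletInit_le n)
  | succ k hk ih =>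
    have exponent_halves : (2 : ℝ) ^ (-((k + 1 : ℕ) : ℝ)) = 2 ^ (-(k : ℝ)) / 2 := by
      rw [Nat.cast_add_one, neg_add', Real.rpow_sub_one two_ne_zero]
    have exponent_le : (2 : ℝ) ^ (-(k : ℝ)) ≤ 1 / 4 := by
      rw [Real.rpow_neg zero_le_two, Real.rpow_natCast, ← one_div]
      exact one_div_le_one_div_of_le (by norm_num)
        (by linarith [pow_le_pow_right₀ (one_le_two (α := ℝ)) hk])
    rw [hrec k hk, exponent_halves]
    exact carletStep_le_of_le hn exponent_le ih

/-- Upper bound on the recursively defined sequence `l_r` arising from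
Carlet's bound for the inverse function. -/
theorem l_seq_upper_bound (n : ℕ) (hn : 6 ≤ n) (l : ℕ → ℝ)
    (h3 : l 3 = (1/2) * Real.sqrt (((2:ℝ) ^ (n:ℝ) - 1) * Real.sqrt
      ((2:ℝ) ^ (3 * (n:ℝ) / 2 + 3) + 3 * (2:ℝ) ^ ((n:ℝ) + 1)
        - (2:ℝ) ^ ((n:ℝ) / 2 + 3) + 16) + (2:ℝ) ^ (n:ℝ)))
    (hrec : ∀ k : ℕ, 3 ≤ k →
      l (k + 1) = Real.sqrt (((2:ℝ) ^ (n:ℝ) - 1) * (l k + 1) + (2:ℝ) ^ ((n:ℝ) - 2)))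
    (r : ℕ) (hr : 3 ≤ r) (hrn : r + 3 ≤ n) :
    l r ≤ (2:ℝ) ^ ((1 - (2:ℝ) ^ (-(r:ℝ))) * (n:ℝ) - (2:ℝ) ^ (-((r:ℝ) - 1)))
      + 3 * (2:ℝ) ^ ((1/2 - (2:ℝ) ^ (-(r:ℝ))) * (n:ℝ)) :=
  l_seq_upper_bound_general n n.cast_nonneg l h3 hrec r hr
end
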